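/- Let p ∈ ℕ ∪ {∞}. Every morphism h : l₁ → l₂ of □_p can be written as a composition of face maps followed by a composition of degeneracies: there exist m ∈ ℕ, a finite list of face maps f_{⋆₁}(m, a₁), …, f_{⋆_r}(l₁−1, a_r) composing to a morphism s : l₁ → m of □_p, and a finite list of degeneracies d(m, b₁), …, d(l₂−1, b_s) composing to a morphism ι : m → l₂ of □_p, such that h = ι ∘ s; moreover these lists can be chosen so that, read in composition order (from right to left, i.e., in the order in which the maps are applied), the second arguments a_r, …, a₁ of the face maps are strictly decreasing and the second arguments b₁, …, b_s of the degeneracies are non-increasing. -/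

import Mathlib

/-- Kleisli composition with error propagation: `(kcomp g f) i = g j` if `f i = Sum.inl j`,
and `Sum.inr ⋆` if `f i = Sum.inr ⋆`. -/
def kcomp {l₁ l₂ l₃ : ℕ} (g : Fin l₂ → Fin l₃ ⊕ Bool) (f : Fin l₁ → Fin l₂ ⊕ Bool) :
    Fin l₁ → Fin l₃ ⊕ Bool := fun i =>
  match f i with
  | Sum.inl j => g j
  | Sum.inr b => Sum.inr b

/-- The face map `f_⋆(l,k) : l+1 → l` in the category `□`. -/
def faceMap (b : Bool) (l k : ℕ) (hk : k ≤ l) : Fin (l + 1) → Fin l ⊕ Bool := fun i =>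
  if h1 : (i : ℕ) < k then Sum.inl ⟨i, by omega⟩
  else if h2 : (i : ℕ) = k then Sum.inr b
  else Sum.inl ⟨(i : ℕ) - 1, by have := i.isLt; omega⟩

/-- The degeneracy `d(l,k) : l → l+1` in the category `□`. -/
def degenMap (l k : ℕ) : Fin l → Fin (l + 1) ⊕ Bool := fun i =>
  if (i : ℕ) < k then Sum.inl ⟨i, by have := i.isLt; omega⟩
  else Sum.inl ⟨(i : ℕ) + 1, by have := i.isLt; omega⟩

/-- Membership in the subcategory `□_p` of `□` (for `p ∈ ℕ ∪ {∞}`): `BoxP p l₁ l₂ h` says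
that `h : Fin l₁ → Fin l₂ ⊕ Bool` is a morphism `l₁ → l₂` of `□_p`, i.e. is generated
under identities and composition by the face maps `f_⋆(l,k)` for `⋆ ∈ Bool`, `k ≤ l < p`
and the degeneracies `d(l,k)` for `k ≤ l < p`. -/
inductive BoxP (p : ℕ∞) : ∀ (l₁ l₂ : ℕ), (Fin l₁ → Fin l₂ ⊕ Bool) → Prop
  | id (l : ℕ) (hl : (l : ℕ∞) ≤ p) : BoxP p l l Sum.inl
  | face (b : Bool) (l k : ℕ) (hk : k ≤ l) (hl : (l : ℕ∞) < p) :
      BoxP p (l + 1) l (faceMap b l k hk)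
  | degen (l k : ℕ) (hk : k ≤ l) (hl : (l : ℕ∞) < p) :
      BoxP p l (l + 1) (degenMap l k)
  | comp {l₁ l₂ l₃ : ℕ} {f : Fin l₁ → Fin l₂ ⊕ Bool} {g : Fin l₂ → Fin l₃ ⊕ Bool} :
      BoxP p l₁ l₂ f → BoxP p l₂ l₃ g → BoxP p l₁ l₃ (kcomp g f)

/-- `FaceComp p l₁ l₂ s L` says that `s : l₁ → l₂` is the composite of the list `L` of face
maps of `□_p`, where `L` records, in order of application (right to left in composition
order), the labels `⋆ ∈ Bool` and second arguments `k` of the face maps. -/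
inductive FaceComp (p : ℕ∞) : ∀ (l₁ l₂ : ℕ), (Fin l₁ → Fin l₂ ⊕ Bool) → List (Bool × ℕ) → Prop
  | nil (l : ℕ) (hl : (l : ℕ∞) ≤ p) : FaceComp p l l Sum.inl []
  | cons {l m : ℕ} {f : Fin l → Fin m ⊕ Bool} {L : List (Bool × ℕ)}
      (b : Bool) (k : ℕ) (hk : k ≤ l) (hl : (l : ℕ∞) < p) :
      FaceComp p l m f L → FaceComp p (l + 1) m (kcomp f (faceMap b l k hk)) ((b, k) :: L)

/-- `DegenComp p l₁ l₂ ι L` says that `ι : l₁ → l₂` is the composite of the list `L` of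
degeneracies of `□_p`, where `L` records, in order of application (right to left in
composition order), the second arguments `k` of the degeneracies. -/
inductive DegenComp (p : ℕ∞) : ∀ (l₁ l₂ : ℕ), (Fin l₁ → Fin l₂ ⊕ Bool) → List ℕ → Prop
  | nil (l : ℕ) (hl : (l : ℕ∞) ≤ p) : DegenComp p l l Sum.inl []
  | cons {m l : ℕ} {g : Fin m → Fin l ⊕ Bool} {L : List ℕ}
      (k : ℕ) (hk : k ≤ l) (hl : (l : ℕ∞) < p) :
      DegenComp p m l g L → DegenComp p m (l + 1) (kcomp (degenMap l k) g) (L ++ [k])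

/-!
The generators, hence all morphisms, of `□_p` are strictly monotone where they are not errors. For such
an `h`, delete the positions of errors from the last one to the first: each deletion is a face map,
and deleting from the right leaves the earlier positions in place, so the indices decrease. What
remains is a strictly monotone map `g` without errors. If `k` is the least value that `g` misses,
then `g` factors through the degeneracy with index `k`, and the other factor misses no value below
`k`. This degeneracy is the last one applied, so repeating the argument builds the list of
degeneracies from its end, with non-decreasing indices, until `g` misses nothing and is an identity.
-/

section PartialStrictMono

variable {α β ε : Type*}

/-- A map with error values in `ε` that is strictly increasing on the set where it takes values in
`β`. This is the invariant of the morphisms of `□_p` used to factor them. -/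
def PartialStrictMono [LT α] [LT β] (h : α → β ⊕ ε) : Prop :=
  ∀ ⦃i j a b⦄, i < j → h i = Sum.inl a → h j = Sum.inl b → a < b

theorem partialStrictMono_inl_comp_iff [Preorder α] [Preorder β] {g : α → β} :
    PartialStrictMono (Sum.inl ∘ g : α → β ⊕ ε) ↔ StrictMono g := by
  simp [PartialStrictMono, StrictMono]

theorem PartialStrictMono.comp_strictMono {γ : Type*} [Preorder γ] [Preorder α] [LT β]
    {h : α → β ⊕ ε} (hh : PartialStrictMono h) {e : γ → α} (he : StrictMono e) :
    PartialStrictMono (h ∘ e) :=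
  fun _ _ _ _ hij ↦ hh (he hij)

theorem eq_inl_comp_or_exists_last_inr [LinearOrder α] [Finite α] (h : α → β ⊕ ε) :
    (∃ g, h = Sum.inl ∘ g) ∨ ∃ k b, h k = Sum.inr b ∧ ∀ i c, h i = Sum.inr c → i ≤ k := by
  by_cases hne : {i | ∃ b, h i = Sum.inr b}.Nonempty
  · obtain ⟨k, ⟨b, hk⟩, hmax⟩ := Set.exists_max_image _ id (Set.toFinite _) hne
    exact .inr ⟨k, b, hk, fun i c hi ↦ hmax i ⟨c, hi⟩⟩
  · have hinl : ∀ i, ∃ a, h i = Sum.inl a := fun i ↦ by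
      rcases hi : h i with a | b
      · exact ⟨a, rfl⟩
      · exact (hne ⟨i, b, hi⟩).elim
    choose g hg using hinl
    exact .inl ⟨g, funext hg⟩

end PartialStrictMono

section Kleisli

variable {l₁ l₂ l₃ l₄ : ℕ}

theorem kcomp_assoc (h : Fin l₃ → Fin l₄ ⊕ Bool) (g : Fin l₂ → Fin l₃ ⊕ Bool)
    (f : Fin l₁ → Fin l₂ ⊕ Bool) : kcomp (kcomp h g) f = kcomp h (kcomp g f) := by
  funext i
  simp only [kcomp]
  cases f i <;> rfl

theorem kcomp_apply_of_eq_inl (g : Fin l₂ → Fin l₃ ⊕ Bool) {f : Fin l₁ → Fin l₂ ⊕ Bool}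
    {i : Fin l₁} {j : Fin l₂} (hi : f i = Sum.inl j) : kcomp g f i = g j := by
  simp only [kcomp, hi]

theorem kcomp_apply_of_eq_inr (g : Fin l₂ → Fin l₃ ⊕ Bool) {f : Fin l₁ → Fin l₂ ⊕ Bool}
    {i : Fin l₁} {b : Bool} (hi : f i = Sum.inr b) : kcomp g f i = Sum.inr b := by
  simp only [kcomp, hi]

theorem kcomp_eq_inl_iff {g : Fin l₂ → Fin l₃ ⊕ Bool} {f : Fin l₁ → Fin l₂ ⊕ Bool}
    {i : Fin l₁} {a : Fin l₃} :
    kcomp g f i = Sum.inl a ↔ ∃ j, f i = Sum.inl j ∧ g j = Sum.inl a := by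
  rcases hi : f i with j | b <;> simp [kcomp, hi]

theorem PartialStrictMono.kcomp {g : Fin l₂ → Fin l₃ ⊕ Bool} {f : Fin l₁ → Fin l₂ ⊕ Bool}
    (hg : PartialStrictMono g) (hf : PartialStrictMono f) : PartialStrictMono (kcomp g f) := by
  intro i j a b hij ha hb
  obtain ⟨c, hic, hca⟩ := kcomp_eq_inl_iff.1 ha
  obtain ⟨d, hjd, hdb⟩ := kcomp_eq_inl_iff.1 hb
  exact hg (hf hij hic hjd) hca hdb

end Kleisli

section Generators

variable {l : ℕ}

theorem degenMap_eq_inl_comp_succAbove (k : Fin (l + 1)) :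
    degenMap l k = Sum.inl ∘ k.succAbove := by
  funext i
  simp only [degenMap, Function.comp_apply, Fin.succAbove, Fin.lt_def, Fin.val_castSucc]
  split_ifs <;> rfl

theorem faceMap_self (b : Bool) (k : Fin (l + 1)) : faceMap b l k k.is_le k = Sum.inr b := by
  simp [faceMap]

theorem faceMap_succAbove (b : Bool) (k : Fin (l + 1)) (i : Fin l) :
    faceMap b l k k.is_le (k.succAbove i) = Sum.inl i := by
  rcases lt_or_ge i.castSucc k with hik | hki
  · simp [faceMap, Fin.succAbove_of_castSucc_lt k i hik, show (i : ℕ) < k from hik]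
  · have : (k : ℕ) ≤ i := hki
    simp [faceMap, Fin.succAbove_of_le_castSucc k i hki, show ¬ (i : ℕ) + 1 < k by omega,
      show (i : ℕ) + 1 ≠ k by omega]

theorem partialStrictMono_degenMap (k : Fin (l + 1)) : PartialStrictMono (degenMap l k) := by
  rw [degenMap_eq_inl_comp_succAbove, partialStrictMono_inl_comp_iff]
  exact k.strictMono_succAbove

theorem partialStrictMono_faceMap (b : Bool) (k : Fin (l + 1)) :
    PartialStrictMono (faceMap b l k k.is_le) := by
  intro i j a c hij ha hc
  obtain rfl | ⟨i, rfl⟩ := k.eq_self_or_eq_succAbove i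
  · simp [faceMap_self] at ha
  obtain rfl | ⟨j, rfl⟩ := k.eq_self_or_eq_succAbove j
  · simp [faceMap_self] at hc
  rw [faceMap_succAbove, Sum.inl.injEq] at ha hc
  rwa [← ha, ← hc, ← Fin.succAbove_lt_succAbove_iff (p := k)]

theorem kcomp_comp_succAbove_faceMap {l₂ : ℕ} {h : Fin (l + 1) → Fin l₂ ⊕ Bool}
    {k : Fin (l + 1)} {b : Bool} (hk : h k = Sum.inr b) :
    kcomp (h ∘ k.succAbove) (faceMap b l k k.is_le) = h := by
  funext i
  obtain rfl | ⟨j, rfl⟩ := k.eq_self_or_eq_succAbove i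
  · rw [kcomp_apply_of_eq_inr _ (faceMap_self b i), hk]
  · rw [kcomp_apply_of_eq_inl _ (faceMap_succAbove b k j), Function.comp_apply]

end Generators

namespace BoxP

variable {p : ℕ∞} {l₁ l₂ : ℕ} {h : Fin l₁ → Fin l₂ ⊕ Bool}

theorem source_le (hh : BoxP p l₁ l₂ h) : (l₁ : ℕ∞) ≤ p := by
  induction hh with
  | id _ hl => exact hl
  | face _ _ _ _ hl => exact ENat.natCast_add_one_le_iff.2 hl
  | degen _ _ _ hl => exact hl.le
  | comp _ _ ihf _ => exact ihf

theorem target_le (hh : BoxP p l₁ l₂ h) : (l₂ : ℕ∞) ≤ p := by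
  induction hh with
  | id _ hl => exact hl
  | face _ _ _ _ hl => exact hl.le
  | degen _ _ _ hl => exact ENat.natCast_add_one_le_iff.2 hl
  | comp _ _ _ ihg => exact ihg

theorem partialStrictMono (hh : BoxP p l₁ l₂ h) : PartialStrictMono h := by
  induction hh with
  | id => exact partialStrictMono_inl_comp_iff.2 strictMono_id
  | face b l k hk => exact partialStrictMono_faceMap b ⟨k, Nat.lt_succ_of_le hk⟩
  | degen l k hk => exact partialStrictMono_degenMap ⟨k, Nat.lt_succ_of_le hk⟩
  | comp _ _ ihf ihg => exact ihg.kcomp ihf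

end BoxP

theorem FaceComp.exists_section {p : ℕ∞} {l m : ℕ} {s : Fin l → Fin m ⊕ Bool}
    {L : List (Bool × ℕ)} (hs : FaceComp p l m s L) :
    ∃ e : Fin m ↪o Fin l, ∀ j, s (e j) = Sum.inl j := by
  induction hs with
  | nil => exact ⟨RelEmbedding.refl _, fun _ ↦ rfl⟩
  | @cons l _ f _ b k hk _ _ ih =>
    obtain ⟨e, he⟩ := ih
    let k' : Fin (l + 1) := ⟨k, Nat.lt_succ_of_le hk⟩
    refine ⟨e.trans k'.succAboveOrderEmb, fun j ↦ ?_⟩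
    exact (kcomp_apply_of_eq_inl f (faceMap_succAbove b k' (e j))).trans (he j)

theorem exists_faceComp_eq_kcomp {p : ℕ∞} {l₁ l₂ : ℕ} (hl : (l₁ : ℕ∞) ≤ p)
    (h : Fin l₁ → Fin l₂ ⊕ Bool) :
    ∃ (m : ℕ) (L : List (Bool × ℕ)) (s : Fin l₁ → Fin m ⊕ Bool) (g : Fin m → Fin l₂),
      FaceComp p l₁ m s L ∧ h = kcomp (Sum.inl ∘ g) s ∧ (L.map Prod.snd).Pairwise (· > ·) ∧
      ∀ k ∈ L.map Prod.snd, ∃ (i : Fin l₁) (b : Bool), (i : ℕ) = k ∧ h i = Sum.inr b := by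
  induction l₁ with
  | zero => exact ⟨0, [], _, Fin.elim0, .nil 0 hl, Subsingleton.elim _ _, .nil, by simp⟩
  | succ l ih =>
    obtain ⟨g, rfl⟩ | ⟨k, b, hk, hmax⟩ := eq_inl_comp_or_exists_last_inr h
    · exact ⟨l + 1, [], _, g, .nil _ hl, rfl, .nil, by simp⟩
    have hlt : (l : ℕ∞) < p := ENat.natCast_add_one_le_iff.1 hl
    obtain ⟨m, L, s, g, hs, hfac, hL, hmem⟩ := ih hlt.le (h ∘ k.succAbove)
    have hbefore : ∀ x ∈ L.map Prod.snd,
        ∃ (i : Fin (l + 1)) (b : Bool), (i : ℕ) = x ∧ i < k ∧ h i = Sum.inr b := by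
      intro x hx
      obtain ⟨i, c, rfl, hi⟩ := hmem x hx
      have hik : i.castSucc < k :=
        (k.succAbove_lt_iff_castSucc_lt i).1 <| (hmax _ _ hi).lt_of_ne (k.succAbove_ne i)
      refine ⟨i.castSucc, c, rfl, hik, ?_⟩
      rwa [Function.comp_apply, Fin.succAbove_of_castSucc_lt k i hik] at hi
    refine ⟨m, (b, k) :: L, _, g, hs.cons b k k.is_le hlt, ?_, ?_, ?_⟩
    · rw [← kcomp_assoc, ← hfac, kcomp_comp_succAbove_faceMap hk]
    · refine List.pairwise_cons.2 ⟨fun x hx ↦ ?_, hL⟩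
      obtain ⟨i, -, rfl, hik, -⟩ := hbefore x hx
      exact hik
    · refine List.forall_mem_cons.2 ⟨⟨k, b, rfl, hk⟩, fun x hx ↦ ?_⟩
      obtain ⟨i, c, hix, -, hi⟩ := hbefore x hx
      exact ⟨i, c, hix, hi⟩

section Degeneracies

variable {p : ℕ∞} {m l : ℕ}

theorem DegenComp.nil_of_surjective (hl : (l : ℕ∞) ≤ p) {g : Fin m → Fin l} (hg : StrictMono g)
    (hsurj : Function.Surjective g) : DegenComp p m l (Sum.inl ∘ g) [] := by
  obtain rfl : m = l := Fin.equiv_iff_eq.1 ⟨.ofBijective g ⟨hg.injective, hsurj⟩⟩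
  obtain rfl : g = id := (StrictMono.range_inj hg strictMono_id).1 (by simp [hsurj.range_eq])
  exact .nil m hl

theorem exists_least_notMem_range {α β : Type*} [LinearOrder β] [WellFoundedLT β] {g : α → β}
    (hg : ¬ Function.Surjective g) : ∃ k ∉ Set.range g, ∀ j ∉ Set.range g, k ≤ j := by
  have hne : (Set.range g)ᶜ.Nonempty := by
    rwa [Set.nonempty_compl, ne_eq, Set.range_eq_univ]
  exact ⟨_, wellFounded_lt.min_mem _ hne, fun j hj ↦ wellFounded_lt.min_le hj⟩

theorem exists_strictMono_eq_succAbove_comp {α : Type*} [Preorder α] {g : α → Fin (l + 1)}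
    (hg : StrictMono g) {k : Fin (l + 1)} (hk : k ∉ Set.range g) :
    ∃ g' : α → Fin l, StrictMono g' ∧ g = k.succAbove ∘ g' := by
  choose g' hg' using fun i ↦ Fin.exists_succAbove_eq (fun hi : g i = k ↦ hk ⟨i, hi⟩)
  refine ⟨g', fun i j hij ↦ ?_, funext fun i ↦ (hg' i).symm⟩
  rw [← Fin.succAbove_lt_succAbove_iff (p := k), hg', hg']
  exact hg hij

theorem exists_degenComp_inl_comp (hl : (l : ℕ∞) ≤ p) {g : Fin m → Fin l} (hg : StrictMono g) :
    ∃ L : List ℕ, DegenComp p m l (Sum.inl ∘ g) L ∧ L.Pairwise (· ≥ ·) ∧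
      ∀ x ∈ L, ∃ j ∉ Set.range g, (j : ℕ) ≤ x := by
  induction l with
  | zero => exact ⟨[], .nil_of_surjective hl hg fun j ↦ j.elim0, .nil, by simp⟩
  | succ l ih =>
    by_cases hsurj : Function.Surjective g
    · exact ⟨[], .nil_of_surjective hl hg hsurj, .nil, by simp⟩
    obtain ⟨k, hk, hmin⟩ := exists_least_notMem_range hsurj
    obtain ⟨g, hg', rfl⟩ := exists_strictMono_eq_succAbove_comp hg hk
    have hlt : (l : ℕ∞) < p := ENat.natCast_add_one_le_iff.1 hl
    obtain ⟨L, hcomp, hL, hmem⟩ := ih hlt.le hg'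
    have hge : ∀ x ∈ L, (k : ℕ) ≤ x := by
      intro x hx
      obtain ⟨j, hj, hjx⟩ := hmem x hx
      have hkj : k ≤ k.succAbove j := hmin _ fun ⟨i, hi⟩ ↦
        hj ⟨i, Fin.succAbove_right_injective hi⟩
      have hkj' : k ≤ j.castSucc := (k.lt_succAbove_iff_le_castSucc j).1 <|
        hkj.lt_of_ne (k.ne_succAbove j)
      exact (Fin.le_def.1 hkj').trans hjx
    refine ⟨L ++ [(k : ℕ)], ?_, ?_, ?_⟩
    · have hcons := hcomp.cons k k.is_le hlt
      rwa [degenMap_eq_inl_comp_succAbove] at hcons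
    · simpa [List.pairwise_append, hL] using hge
    · exact List.forall_mem_append.2
        ⟨fun x hx ↦ ⟨k, hk, hge x hx⟩, List.forall_mem_singleton.2 ⟨k, hk, le_rfl⟩⟩

end Degeneracies

/-- Every morphism `h : l₁ → l₂` of `□_p` factors as a composite of face maps followed by a
composite of degeneracies, `h = ι ∘ s`, and the lists can be chosen so that in application
order the second arguments of the face maps are strictly decreasing and the second arguments
of the degeneracies are non-increasing. -/
theorem boxP_factorization (p : ℕ∞) (l₁ l₂ : ℕ) (h : Fin l₁ → Fin l₂ ⊕ Bool)
    (hh : BoxP p l₁ l₂ h) :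
    ∃ (m : ℕ) (Lf : List (Bool × ℕ)) (Ld : List ℕ)
      (s : Fin l₁ → Fin m ⊕ Bool) (ι : Fin m → Fin l₂ ⊕ Bool),
      FaceComp p l₁ m s Lf ∧ DegenComp p m l₂ ι Ld ∧ h = kcomp ι s ∧
      (Lf.map Prod.snd).Chain' (· > ·) ∧ Ld.Chain' (· ≥ ·) := by
  obtain ⟨m, Lf, s, g, hs, hfac, hLf, -⟩ := exists_faceComp_eq_kcomp hh.source_le h
  obtain ⟨e, he⟩ := hs.exists_section
  have hhe : h ∘ e = Sum.inl ∘ g := by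
    funext j
    rw [hfac, Function.comp_apply, kcomp_apply_of_eq_inl _ (he j), Function.comp_apply]
  have hg : StrictMono g := by
    rw [← partialStrictMono_inl_comp_iff (ε := Bool), ← hhe]
    exact hh.partialStrictMono.comp_strictMono e.strictMono
  obtain ⟨Ld, hι, hLd, -⟩ := exists_degenComp_inl_comp hh.target_le hg
  exact ⟨m, Lf, Ld, s, Sum.inl ∘ g, hs, hι, hfac, hLf.isChain, hLd.isChain⟩
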